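/- Let n ≥ 1 and 1 < β < ∞. Let δ(·) and δ̃(·) be measurable functions on ℝⁿ with 0 ≤ δ̃(x) < δ(x) < 1 for a.e. x, and define exponents s(·) and p(·) by δ(x)/n = 1/β − 1/s(x) and δ̃(x)/n = 1/β − 1/p(x); assume s(·), p(·) ∈ 𝒫^log(ℝⁿ) and that the exponent q(x) = n/(δ(x) − δ̃(x)) belongs to 𝒫(ℝⁿ). If w is a weight with w^{−1} ∈ A_{q(·), ∞}, then there is a constant C, independent of f, such that for every f ∈ L¹_loc(ℝⁿ): ‖ f^♯_{δ̃(·)} / w ‖_∞ ≤ C ‖ f^♯_{δ(·)} / w ‖_{q(·)}, where f^♯_{δ(·)}(x) = sup_{B ∋ x} ( |B|^{1/β} ‖χ_B‖_{s'(·)} )^{−1} ∫_B |f − m_B f| and f^♯_{δ̃(·)}(x) = sup_{B ∋ x} ( |B|^{1/β} ‖χ_B‖_{p'(·)} )^{−1} ∫_B |f − m_B f|, the suprema being over all balls B containing x. -/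

import Mathlib

/-!
Fix a ball `B` and put `A = ∫_B |f - m_B f|` and `a = A / (|B| ^ (1/β) ‖χ_B‖_{s'(·)})`. Then `a` is
a lower bound for `f^♯_{δ(·)}` on all of `B`, so `‖a w⁻¹ χ_B‖_{q(·)} ≤ N := ‖f^♯_{δ(·)} / w‖_{q(·)}`,
and Hölder's inequality (`holder_ball`) gives `a |B| ≤ 2 N ‖w χ_B‖_{q'(·)}`. Multiplying by
`w(x)⁻¹ ≤ ‖w⁻¹ χ_B‖_∞`, valid for almost every `x` and all balls `B ∋ x` (`ae_le_essSup_ball`), and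
using `w⁻¹ ∈ A_{q(·),∞}`, one gets `a |B| w(x)⁻¹ ≤ C N ‖χ_B‖_{q'(·)}`. The desired bound for
`A / (|B| ^ (1/β) ‖χ_B‖_{p'(·)} w(x))` follows from
`‖χ_B‖_{s'(·)} ‖χ_B‖_{q'(·)} ≤ C |B| ‖χ_B‖_{p'(·)}`.

This last estimate rests on log-Hölder continuity. By `exists_modular_le`, there is a reference
point `z`, depending only on `B`, with `‖χ_B‖_{r(·)} ≤ K |B| ^ (1 / r z)` for `r = s', q', p`. As
`1/q = 1/p - 1/s`, the reciprocals of these exponents add up to `2`; combine this with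
`|B| ≤ 2 ‖χ_B‖_{p(·)} ‖χ_B‖_{p'(·)}` (`le_chi_norm`).

Degenerate weights need no separate treatment: the pointwise Young inequality holds for all values
of `w` in `[0, ∞]`.
-/

open MeasureTheory Metric ENNReal NNReal

noncomputable section

/-- Euclidean space `ℝⁿ`. -/
abbrev E (n : ℕ) := EuclideanSpace ℝ (Fin n)

/-- The Luxemburg norm of `f` with respect to the variable exponent `p(·)`. -/
noncomputable def luxNorm {n : ℕ} (p : E n → ℝ) (f : E n → ℝ≥0∞) : ℝ≥0∞ :=
  sInf {lam : ℝ≥0∞ | lam ≠ 0 ∧ (∫⁻ x, (f x / lam) ^ p x) ≤ 1}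

/-- The log-Hölder continuity and log-decay conditions defining `𝒫^log`. -/
def LogHolder (n : ℕ) (p : E n → ℝ) : Prop :=
  ∃ C : ℝ,
    (∀ x y : E n, |p x - p y| ≤ C / Real.log (Real.exp 1 + 1 / dist x y)) ∧
    (∀ x y : E n, ‖x‖ ≤ ‖y‖ → |p x - p y| ≤ C / Real.log (Real.exp 1 + ‖x‖))

/-- The class `A_{p(·),∞}`: `‖u χ_B‖_∞ ‖u⁻¹ χ_B‖_{p'(·)} ≤ C ‖χ_B‖_{p'(·)}`. -/
def AvarInf (n : ℕ) (p : E n → ℝ) (u : E n → ℝ≥0∞) : Prop :=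
  ∃ C : ℝ≥0, ∀ (c : E n) (R : ℝ), 0 < R →
    essSup u (volume.restrict (ball c R)) *
        luxNorm (fun x => p x / (p x - 1)) ((ball c R).indicator (fun y => (u y)⁻¹)) ≤
      (C : ℝ≥0∞) * luxNorm (fun x => p x / (p x - 1))
        ((ball c R).indicator (fun _ => (1 : ℝ≥0∞)))

/-- The Muckenhoupt class `A₁`. -/
def A1Class (n : ℕ) (u : E n → ℝ≥0∞) : Prop :=
  ∃ C : ℝ≥0, ∀ (c : E n) (R : ℝ), 0 < R →
    (∫⁻ y in ball c R, u y) ≤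
      (C : ℝ≥0∞) * volume (ball c R) * essInf u (volume.restrict (ball c R))

/-- The variable `δ(·)`-sharp maximal function, written in terms of the conjugate
exponent `sc = s'(·)` of the exponent `s(·)` given by `δ(x)/n = 1/β − 1/s(x)`:
`f^♯(x) = sup_{B ∋ x} (|B|^{1/β} ‖χ_B‖_{s'(·)})⁻¹ ∫_B |f − m_B f|`. -/
noncomputable def sharpVar {n : ℕ} (β : ℝ) (sc : E n → ℝ) (f : E n → ℝ) (x : E n) : ℝ≥0∞ :=
  ⨆ (c : E n) (R : ℝ) (_ : 0 < R ∧ x ∈ ball c R),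
    (volume (ball c R) ^ ((1 : ℝ) / β) *
        luxNorm sc ((ball c R).indicator (fun _ => (1 : ℝ≥0∞))))⁻¹ *
      ∫⁻ y in ball c R, ENNReal.ofReal |f y - (⨍ z in ball c R, f z)|

/-! ### Logarithmic bounds and log-Hölder exponents -/

/-- On a ball of radius `R` and measure `V = R ^ n * v ≤ 1`, the quantity `log (1 / V)` is
controlled by the local log-Hölder modulus at distance `d < R`. -/
lemma local_log_bound {n : ℕ} {v R V d : ℝ} (hv : 0 < v) (hR : 0 < R)
    (hV : V = R ^ n * v) (hV1 : V ≤ 1) (hd : 0 < d) (hdR : d < R) :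
    |Real.log V| ≤ (n + |Real.log v|) * Real.log (Real.exp 1 + 1 / d) := by
  have hVpos : 0 < V := by rw [hV]; positivity
  have h1 : Real.log V = n * Real.log R + Real.log v := by
    rw [hV, Real.log_mul (by positivity) hv.ne', Real.log_pow]
  have h2 : 1 ≤ Real.log (Real.exp 1 + 1 / d) := by
    rw [Real.le_log_iff_exp_le (by positivity)]
    have : 0 < 1 / d := by positivity
    linarith
  have h3 : -Real.log R ≤ Real.log (Real.exp 1 + 1 / d) := by
    rw [← Real.log_inv]
    apply Real.log_le_log (by positivity)
    have : R⁻¹ ≤ 1 / d := by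
      rw [one_div]; exact inv_anti₀ hd hdR.le
    have := Real.exp_pos 1
    linarith
  rw [abs_of_nonpos (Real.log_nonpos hVpos.le hV1), h1]
  have h4 := neg_abs_le (Real.log v)
  have h5 : |Real.log v| ≤ |Real.log v| * Real.log (Real.exp 1 + 1 / d) :=
    le_mul_of_one_le_right (abs_nonneg _) h2
  have h6 : (n : ℝ) * (-Real.log R) ≤ n * Real.log (Real.exp 1 + 1 / d) :=
    mul_le_mul_of_nonneg_left h3 (Nat.cast_nonneg n)
  linarith

/-- Outside the ball of radius `V ^ ε` about the origin, the decay modulus controls `log V`. -/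
lemma global_log_bound {ε V t : ℝ} (hε : 0 < ε) (hV1 : 1 < V) (ht : V ^ ε ≤ t) :
    |Real.log V| ≤ ε⁻¹ * Real.log (Real.exp 1 + t) := by
  have hV : 0 < V := by linarith
  have hp : 0 < V ^ ε := Real.rpow_pos_of_pos hV ε
  rw [abs_of_pos (Real.log_pos hV1), ← div_eq_inv_mul, le_div_iff₀ hε, mul_comm,
    ← Real.log_rpow hV]
  apply Real.log_le_log hp
  have := Real.exp_pos 1
  linarith

/-- The log-Hölder conditions in product form; the constant is automatically nonnegative. -/
lemma LogHolder.exists_nonneg {n : ℕ} {a : E n → ℝ} (h : LogHolder n a) :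
    ∃ C : ℝ, 0 ≤ C ∧
      (∀ x y : E n, |a x - a y| * Real.log (Real.exp 1 + 1 / dist x y) ≤ C) ∧
      (∀ x y : E n, ‖x‖ ≤ ‖y‖ → |a x - a y| * Real.log (Real.exp 1 + ‖x‖) ≤ C) := by
  obtain ⟨C, h1, h2⟩ := h
  have e1 := Real.add_one_le_exp (1 : ℝ)
  refine ⟨C, ?_, fun x y => ?_, fun x y hxy => ?_⟩
  · have := h1 0 0
    simpa using this
  · refine (le_div_iff₀ (Real.log_pos ?_)).1 (h1 x y)
    have : 0 ≤ 1 / dist x y := by positivity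
    linarith
  · refine (le_div_iff₀ (Real.log_pos ?_)).1 (h2 x y hxy)
    have := norm_nonneg x
    linarith

/-- An exponent whose oscillation is dominated by those of two log-Hölder functions is log-Hölder.
Taking `b = c` gives the case of a single dominating function. -/
lemma LogHolder.of_le {n : ℕ} {a b c : E n → ℝ} (hb : LogHolder n b) (hc : LogHolder n c) (L : ℝ)
    (hL : 0 ≤ L) (h : ∀ x y, |a x - a y| ≤ L * |b x - b y| + L * |c x - c y|) :
    LogHolder n a := by
  obtain ⟨B, hB1, hB2⟩ := hb
  obtain ⟨C, hC1, hC2⟩ := hc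
  refine ⟨L * B + L * C, fun x y => (h x y).trans ?_, fun x y hxy => (h x y).trans ?_⟩
  · rw [add_div, mul_div_assoc, mul_div_assoc]
    gcongr
    exacts [hB1 x y, hC1 x y]
  · rw [add_div, mul_div_assoc, mul_div_assoc]
    gcongr
    exacts [hB2 x y hxy, hC2 x y hxy]

lemma abs_inv_sub_inv_le {u v : ℝ} (hu : 1 ≤ u) (hv : 1 ≤ v) : |u⁻¹ - v⁻¹| ≤ |u - v| := by
  have hu0 : 0 < u := by linarith
  have hv0 : 0 < v := by linarith
  rw [inv_sub_inv hu0.ne' hv0.ne', abs_div, abs_sub_comm v u, abs_of_pos (mul_pos hu0 hv0)]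
  exact div_le_self (abs_nonneg _) (by nlinarith)

/-! ### Norms of indicators of balls -/

/-- `z` is a reference point for the ball `B = B(c, R)`, i.e. a point for which `‖χ_B‖_{r(·)}` is
comparable to `|B| ^ (1 / r z)` simultaneously for all log-Hölder exponents `r`: the centre if
`|B| ≤ 1`, and any point with `‖z‖ ≥ |B|` if `|B| > 1`. Such a far away point takes the place of
the limit exponent at infinity. -/
def IsRef {n : ℕ} (c : E n) (R : ℝ) (z : E n) : Prop :=
  ((volume (ball c R)).toReal ≤ 1 → z = c) ∧
    (1 < (volume (ball c R)).toReal → (volume (ball c R)).toReal ≤ ‖z‖)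

lemma exists_isRef {n : ℕ} (hn : 1 ≤ n) (c : E n) (R : ℝ) : ∃ z, IsRef c R z := by
  have : Nonempty (Fin n) := ⟨⟨0, hn⟩⟩
  rcases le_or_gt (volume (ball c R)).toReal 1 with h | h
  · exact ⟨c, fun _ => rfl, fun h' => absurd h h'.not_ge⟩
  · obtain ⟨z, hz⟩ := NormedSpace.exists_lt_norm ℝ (E n) (volume (ball c R)).toReal
    exact ⟨z, fun h' => absurd h h'.not_gt, fun _ => hz.le⟩

/-- If the exponent `1 / r` is within `D / (r |log V|)` of `a`, then `(K V ^ a) ^ (-r)` is at most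
a constant times `V⁻¹`. -/
lemma pointwise_bound {K V r a D : ℝ} (hK : 1 ≤ K) (hV : 0 < V) (hr : 1 ≤ r)
    (h : |Real.log V| * |r⁻¹ - a| * r ≤ D) :
    (1 / (K * V ^ a)) ^ r ≤ K⁻¹ * (Real.exp D * V⁻¹) := by
  have hr0 : 0 < r := by linarith
  have hK0 : 0 < K := by linarith
  have e1 : (1 / (K * V ^ a)) ^ r = (K⁻¹) ^ r * V ^ (-(a * r)) := by
    rw [one_div, mul_inv, Real.mul_rpow (by positivity) (by positivity),
      Real.inv_rpow (Real.rpow_nonneg hV.le a), ← Real.rpow_mul hV.le, ← Real.rpow_neg hV.le]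
  rw [e1]
  -- the identity `V ^ (-a r) = V ^ (1 - a r) V⁻¹` with `1 - a r = (1 / r - a) r`
  have e2 : V ^ (-(a * r)) = Real.exp (Real.log V * (r⁻¹ - a) * r) * V⁻¹ := by
    rw [Real.rpow_def_of_pos hV]
    conv_rhs => rw [← Real.exp_log hV, ← Real.exp_neg, ← Real.exp_add, Real.exp_log hV]
    congr 1
    field_simp
    ring
  rw [e2]
  gcongr
  · have : (K⁻¹) ^ r ≤ (K⁻¹) ^ (1 : ℝ) :=
      Real.rpow_le_rpow_of_exponent_ge (by positivity) (inv_le_one_of_one_le₀ hK) hr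
    simpa using this
  · refine le_trans ?_ h
    rw [← abs_mul]
    gcongr
    exact le_abs_self _

/-- Crude bound for `(K V ^ a) ^ (-r)`, used at points too close to the origin for the decay
condition to help. -/
lemma pointwise_bound' {K V r a b : ℝ} (hK : 1 ≤ K) (hV : 1 < V) (hr : 1 ≤ r)
    (hb : 0 < b) (ha : b ≤ a) :
    (1 / (K * V ^ a)) ^ r ≤ K⁻¹ * V ^ (-b) := by
  have hr0 : 0 < r := by linarith
  have hK0 : 0 < K := by linarith
  have hV0 : 0 < V := by linarith
  have e1 : (1 / (K * V ^ a)) ^ r = (K⁻¹) ^ r * V ^ (-(a * r)) := by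
    rw [one_div, mul_inv, Real.mul_rpow (by positivity) (by positivity),
      Real.inv_rpow (Real.rpow_nonneg hV0.le a), ← Real.rpow_mul hV0.le, ← Real.rpow_neg hV0.le]
  rw [e1]
  gcongr
  · have : (K⁻¹) ^ r ≤ (K⁻¹) ^ (1 : ℝ) :=
      Real.rpow_le_rpow_of_exponent_ge (by positivity) (inv_le_one_of_one_le₀ hK) hr
    simpa using this
  · exact hV.le
  · nlinarith

/-- The upper bound `‖χ_B‖_{r(·)} ≤ K |B| ^ (1 / r z)`, in modular form. Where `1 / r x` is not
close enough to `1 / r z`, the ball is large and `x` lies in the ball of radius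
`|B| ^ (1 / (M n))` about the origin, whose measure `v |B| ^ (1 / M)` is compensated by the factor
`|B| ^ (-r x / r z) ≤ |B| ^ (-1 / M)`. -/
lemma exists_modular_le {n : ℕ} (hn : 1 ≤ n) (r : E n → ℝ) (M : ℝ) (h1 : ∀ x, 1 ≤ r x)
    (hM : ∀ x, r x ≤ M) (hr : LogHolder n (fun x => (r x)⁻¹)) :
    ∃ K : ℝ, 0 < K ∧ ∀ (c : E n) (R : ℝ), 0 < R → ∀ z, IsRef c R z →
      ∫⁻ x, ((ball c R).indicator (fun _ => (1 : ℝ≥0∞)) x /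
        ENNReal.ofReal (K * (volume (ball c R)).toReal ^ (r z)⁻¹)) ^ r x ≤ 1 := by
  obtain ⟨C, hC0, hC1, hC2⟩ := hr.exists_nonneg
  have hn0 : (0 : ℝ) < n := by exact_mod_cast hn
  have hM1 : 1 ≤ M := (h1 0).trans (hM 0)
  have hM0 : 0 < M := by linarith
  have : Nonempty (Fin n) := ⟨⟨0, hn⟩⟩
  have : Nontrivial (E n) := inferInstance
  have hvol : ∀ (c : E n) (R : ℝ), 0 < R →
      (volume (ball c R)).toReal = R ^ n * (volume (ball (0 : E n) 1)).toReal := by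
    intro c R hR
    rw [Measure.addHaar_ball _ _ hR.le, ENNReal.toReal_mul, finrank_euclideanSpace_fin,
      ENNReal.toReal_ofReal (by positivity)]
  have hpos : ∀ (c : E n) (R : ℝ), 0 < R → 0 < (volume (ball c R)).toReal := fun c R hR =>
    ENNReal.toReal_pos (measure_ball_pos _ _ hR).ne' measure_ball_lt_top.ne
  have hv := hpos 0 1 one_pos
  set v := (volume (ball (0 : E n) 1)).toReal with hvdef
  set ε : ℝ := (M * n)⁻¹ with hε
  have hε0 : 0 < ε := by positivity
  set D : ℝ := ((n + |Real.log v|) * C + ε⁻¹ * C) * M with hD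
  have hD0 : 0 ≤ D := by positivity
  set K : ℝ := Real.exp D + v with hK
  have hK1 : 1 ≤ K := by
    have := Real.add_one_le_exp D
    linarith
  have hK0 : 0 < K := by linarith
  refine ⟨K, hK0, fun c R hR z hz => ?_⟩
  have hV := hpos c R hR
  have hVeq := hvol c R hR
  obtain ⟨hz1, hz2⟩ := hz
  have hVtop : volume (ball c R) = ENNReal.ofReal (volume (ball c R)).toReal :=
    (ENNReal.ofReal_toReal measure_ball_lt_top.ne).symm
  set V := (volume (ball c R)).toReal with hVdef
  -- either `1 / r x` and `1 / r z` are comparable, or `B` is large and `x` is near the origin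
  have key : ∀ x ∈ ball c R,
      |Real.log V| * |(r x)⁻¹ - (r z)⁻¹| * r x ≤ D ∨ (1 < V ∧ x ∈ ball (0 : E n) (V ^ ε)) := by
    intro x hx
    rcases le_or_gt V 1 with hV1 | hV1
    · left
      have hzc := hz1 hV1
      subst hzc
      rcases eq_or_ne x z with rfl | hxz
      · simpa using hD0
      have hd := dist_pos.2 hxz
      have b1 := local_log_bound hv hR hVeq hV1 hd hx
      have b2 := hC1 x z
      have hlog : 0 ≤ Real.log (Real.exp 1 + 1 / dist x z) := by
        apply Real.log_nonneg
        have := Real.add_one_le_exp (1 : ℝ)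
        have : 0 ≤ 1 / dist x z := by positivity
        linarith
      calc |Real.log V| * |(r x)⁻¹ - (r z)⁻¹| * r x
          ≤ ((n + |Real.log v|) * Real.log (Real.exp 1 + 1 / dist x z)) *
              |(r x)⁻¹ - (r z)⁻¹| * M := by
            gcongr
            exacts [by linarith [h1 x], hM x]
        _ = (n + |Real.log v|) * (|(r x)⁻¹ - (r z)⁻¹| *
              Real.log (Real.exp 1 + 1 / dist x z)) * M := by ring
        _ ≤ (n + |Real.log v|) * C * M := by gcongr
        _ ≤ D := by
            rw [hD]
            gcongr
            have : 0 ≤ ε⁻¹ * C := by positivity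
            linarith
    · by_cases hx0 : x ∈ ball (0 : E n) (V ^ ε)
      · exact Or.inr ⟨hV1, hx0⟩
      left
      have hxn : V ^ ε ≤ ‖x‖ := by simpa using hx0
      have hε1 : ε ≤ 1 := by
        rw [hε]
        apply inv_le_one_of_one_le₀
        have : (1 : ℝ) ≤ n := by exact_mod_cast hn
        nlinarith
      have hzn : V ^ ε ≤ ‖z‖ := by
        refine le_trans ?_ (hz2 hV1)
        simpa using Real.rpow_le_rpow_of_exponent_le hV1.le hε1
      have b : |Real.log V| * |(r x)⁻¹ - (r z)⁻¹| ≤ ε⁻¹ * C := by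
        rcases le_total ‖x‖ ‖z‖ with h | h
        · calc |Real.log V| * |(r x)⁻¹ - (r z)⁻¹|
              ≤ (ε⁻¹ * Real.log (Real.exp 1 + ‖x‖)) * |(r x)⁻¹ - (r z)⁻¹| := by
                gcongr
                exact global_log_bound hε0 hV1 hxn
            _ = ε⁻¹ * (|(r x)⁻¹ - (r z)⁻¹| * Real.log (Real.exp 1 + ‖x‖)) := by ring
            _ ≤ ε⁻¹ * C := by
                gcongr
                exact hC2 x z h
        · calc |Real.log V| * |(r x)⁻¹ - (r z)⁻¹|
              ≤ (ε⁻¹ * Real.log (Real.exp 1 + ‖z‖)) * |(r x)⁻¹ - (r z)⁻¹| := by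
                gcongr
                exact global_log_bound hε0 hV1 hzn
            _ = ε⁻¹ * (|(r z)⁻¹ - (r x)⁻¹| * Real.log (Real.exp 1 + ‖z‖)) := by
                rw [abs_sub_comm]; ring
            _ ≤ ε⁻¹ * C := by
                gcongr
                exact hC2 z x h
      calc |Real.log V| * |(r x)⁻¹ - (r z)⁻¹| * r x ≤ ε⁻¹ * C * M := by
            gcongr
            exacts [by linarith [h1 x], hM x]
        _ ≤ D := by
            rw [hD]
            gcongr
            have : 0 ≤ (n + |Real.log v|) * C := by positivity
            linarith
  have hden : 0 < K * V ^ (r z)⁻¹ := by positivity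
  have step : ∀ x, ((ball c R).indicator (fun _ => (1 : ℝ≥0∞)) x /
        ENNReal.ofReal (K * V ^ (r z)⁻¹)) ^ r x ≤
      (ball c R).indicator (fun _ => ENNReal.ofReal (K⁻¹ * (Real.exp D * V⁻¹))) x +
        (ball (0 : E n) (V ^ ε)).indicator (fun _ => ENNReal.ofReal (K⁻¹ * V ^ (-M⁻¹))) x := by
    intro x
    have hrx : 0 < r x := by linarith [h1 x]
    by_cases hx : x ∈ ball c R
    · rw [Set.indicator_of_mem hx, Set.indicator_of_mem hx, ← ENNReal.ofReal_one,
        ← ENNReal.ofReal_div_of_pos hden, ENNReal.ofReal_rpow_of_pos (by positivity)]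
      rcases key x hx with h | ⟨hV1, h⟩
      · exact le_add_right (ENNReal.ofReal_le_ofReal (pointwise_bound hK1 hV (h1 x) h))
      · rw [Set.indicator_of_mem h]
        refine le_add_left (ENNReal.ofReal_le_ofReal
          (pointwise_bound' hK1 hV1 (h1 x) (by positivity) ?_))
        exact inv_anti₀ (by linarith [h1 z]) (hM z)
    · rw [Set.indicator_of_notMem hx, ENNReal.zero_div, ENNReal.zero_rpow_of_pos hrx]
      exact zero_le
  have hVε : 0 < V ^ ε := by positivity
  calc _ ≤ ∫⁻ x, ((ball c R).indicator (fun _ => ENNReal.ofReal (K⁻¹ * (Real.exp D * V⁻¹))) x +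
        (ball (0 : E n) (V ^ ε)).indicator (fun _ => ENNReal.ofReal (K⁻¹ * V ^ (-M⁻¹))) x) :=
        lintegral_mono step
    _ = ENNReal.ofReal (K⁻¹ * (Real.exp D * V⁻¹)) * volume (ball c R) +
        ENNReal.ofReal (K⁻¹ * V ^ (-M⁻¹)) * volume (ball (0 : E n) (V ^ ε)) := by
        rw [lintegral_add_left (measurable_const.indicator measurableSet_ball),
          lintegral_indicator_const measurableSet_ball,
          lintegral_indicator_const measurableSet_ball]
    _ = ENNReal.ofReal (K⁻¹ * (Real.exp D * V⁻¹) * V + K⁻¹ * V ^ (-M⁻¹) * (V ^ M⁻¹ * v)) := by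
        have e : (V ^ ε) ^ n = V ^ M⁻¹ := by
          rw [← Real.rpow_natCast, ← Real.rpow_mul hV.le]
          congr 1
          rw [hε]
          field_simp
        have e2 : volume (ball (0 : E n) (V ^ ε)) = ENNReal.ofReal (V ^ M⁻¹ * v) := by
          rw [← e, ← hvol 0 _ hVε, ENNReal.ofReal_toReal measure_ball_lt_top.ne]
        rw [e2, hVtop, ← ENNReal.ofReal_mul (by positivity), ← ENNReal.ofReal_mul (by positivity),
          ← ENNReal.ofReal_add (by positivity) (by positivity)]
    _ = 1 := by
        have e3 : V ^ (-M⁻¹) * V ^ M⁻¹ = 1 := by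
          rw [← Real.rpow_add hV]; simp
        have : K⁻¹ * (Real.exp D * V⁻¹) * V + K⁻¹ * V ^ (-M⁻¹) * (V ^ M⁻¹ * v) = 1 := by
          calc _ = K⁻¹ * (Real.exp D * (V⁻¹ * V) + (V ^ (-M⁻¹) * V ^ M⁻¹) * v) := by ring
            _ = K⁻¹ * K := by rw [e3, inv_mul_cancel₀ hV.ne', hK]; ring
            _ = 1 := inv_mul_cancel₀ hK0.ne'
        rw [this, ENNReal.ofReal_one]
    _ ≤ 1 := le_rfl

/-! ### Hölder's inequality and essential suprema -/

/-- Young's inequality for the factors `a / (u lam)` and `u / mu`. It also holds for `u = 0` and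
`u = ∞`, where the right-hand side is infinite. -/
lemma young_pointwise {a lam mu u : ℝ≥0∞} {r r' : ℝ} (hr : r.HolderConjugate r') (ha : a ≠ 0)
    (hl0 : lam ≠ 0) (hl : lam ≠ ∞) (hm : mu ≠ ∞) :
    a / (lam * mu) ≤ (a * u⁻¹ / lam) ^ r + (u / mu) ^ r' := by
  have hr0 := hr.pos
  have hr0' := hr.symm.pos
  by_cases hu0 : u = 0
  · simp [hu0, ENNReal.mul_top ha, ENNReal.top_div_of_ne_top hl, hr0]
  by_cases hut : u = ∞
  · simp [hut, ENNReal.top_div_of_ne_top hm, hr0']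
  have e : a / (lam * mu) = (a * u⁻¹ / lam) * (u / mu) := by
    rw [div_eq_mul_inv, div_eq_mul_inv, div_eq_mul_inv,
      ENNReal.mul_inv (Or.inl hl0) (Or.inl hl)]
    calc a * (lam⁻¹ * mu⁻¹) = a * (u⁻¹ * u) * (lam⁻¹ * mu⁻¹) := by
          rw [ENNReal.inv_mul_cancel hu0 hut, mul_one]
      _ = _ := by ring
  rw [e]
  refine (ENNReal.young_inequality _ _ hr).trans ?_
  gcongr
  · refine ENNReal.div_le_of_le_mul (le_mul_of_one_le_right (zero_le) ?_)
    simpa using hr.lt.le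
  · refine ENNReal.div_le_of_le_mul (le_mul_of_one_le_right (zero_le) ?_)
    simpa using hr.symm.lt.le

/-- Hölder's inequality `a |B| ≤ 2 lam ‖w χ_B‖_{q'(·)}` whenever `lam` bounds
`‖a w⁻¹ χ_B‖_{q(·)}`. -/
lemma holder_ball {n : ℕ} {q : E n → ℝ} {w : E n → ℝ≥0∞} (hq : Measurable q) (hw : Measurable w)
    (h1 : ∀ x, 1 < q x) {a lam : ℝ≥0∞} (ha : a ≠ 0) (hl0 : lam ≠ 0) (hl : lam ≠ ∞)
    (c : E n) (R : ℝ) (h : ∫⁻ x in ball c R, (a * (w x)⁻¹ / lam) ^ q x ≤ 1) :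
    a * volume (ball c R) ≤
      2 * lam * luxNorm (fun x => q x / (q x - 1)) ((ball c R).indicator w) := by
  have h2l0 : 2 * lam ≠ 0 := mul_ne_zero two_ne_zero hl0
  have h2l : 2 * lam ≠ ∞ := ENNReal.mul_ne_top ENNReal.ofNat_ne_top hl
  rw [mul_comm (2 * lam), ← ENNReal.div_le_iff_le_mul (Or.inl h2l0) (Or.inl h2l)]
  refine le_sInf fun mu hmu => ?_
  obtain ⟨hm0, hmu⟩ := hmu
  rcases eq_or_ne mu ∞ with rfl | hm
  · exact le_top
  rw [ENNReal.div_le_iff_le_mul (Or.inl h2l0) (Or.inl h2l)]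
  have hlm0 : lam * mu ≠ 0 := mul_ne_zero hl0 hm0
  have hlm : lam * mu ≠ ∞ := ENNReal.mul_ne_top hl hm
  have hm' : Measurable fun x => (a * (w x)⁻¹ / lam) ^ q x :=
    ((hw.inv.const_mul a).div_const lam).pow hq
  have main : a / (lam * mu) * volume (ball c R) ≤ 2 := by
    calc a / (lam * mu) * volume (ball c R) = ∫⁻ _ in ball c R, a / (lam * mu) := by
          rw [setLIntegral_const]
      _ ≤ ∫⁻ x in ball c R, ((a * (w x)⁻¹ / lam) ^ q x + (w x / mu) ^ (q x / (q x - 1))) :=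
          lintegral_mono fun x =>
            young_pointwise (Real.HolderConjugate.conjExponent (h1 x)) ha hl0 hl hm
      _ = (∫⁻ x in ball c R, (a * (w x)⁻¹ / lam) ^ q x) +
            ∫⁻ x in ball c R, (w x / mu) ^ (q x / (q x - 1)) := lintegral_add_left hm' _
      _ ≤ 1 + 1 := by
          refine add_le_add h (le_trans ?_ hmu)
          rw [← lintegral_indicator measurableSet_ball]
          refine lintegral_mono fun x => ?_
          by_cases hx : x ∈ ball c R <;> simp [hx]
      _ = 2 := one_add_one_eq_two
  have : a * volume (ball c R) = a / (lam * mu) * volume (ball c R) * (lam * mu) := by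
    rw [mul_right_comm, ENNReal.div_mul_cancel hlm0 hlm]
  rw [this]
  calc _ ≤ 2 * (lam * mu) := by gcongr
    _ = mu * (2 * lam) := by ring

lemma luxNorm_le {n : ℕ} {p : E n → ℝ} {f : E n → ℝ≥0∞} {lam : ℝ≥0∞} (h0 : lam ≠ 0)
    (h : ∫⁻ x, (f x / lam) ^ p x ≤ 1) : luxNorm p f ≤ lam := sInf_le ⟨h0, h⟩

/-- Almost every point `x` satisfies `u x ≤ ‖u χ_B‖_∞` for all balls `B ∋ x` simultaneously:
it is enough to test the members of a countable basis, as one of them lies between `x` and `B`. -/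
lemma ae_le_essSup_ball {n : ℕ} (u : E n → ℝ≥0∞) :
    ∀ᵐ x, ∀ (c : E n) (R : ℝ), x ∈ ball c R → u x ≤ essSup u (volume.restrict (ball c R)) := by
  have hb := TopologicalSpace.isBasis_countableBasis (E n)
  have h : ∀ᵐ x, ∀ U ∈ TopologicalSpace.countableBasis (E n), x ∈ U →
      u x ≤ essSup u (volume.restrict U) := by
    rw [ae_ball_iff (TopologicalSpace.countable_countableBasis (E n))]
    intro U hU
    rw [← ae_restrict_iff' (hb.isOpen hU).measurableSet]
    exact ENNReal.ae_le_essSup u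
  filter_upwards [h] with x hx c R hxB
  obtain ⟨U, hU, hxU, hUB⟩ := hb.exists_subset_of_mem_open hxB isOpen_ball
  exact (hx U hU hxU).trans
    (essSup_mono_measure (Measure.restrict_mono hUB le_rfl).absolutelyContinuous)

/-- The lower bound `|B| ≤ 2 lam ‖χ_B‖_{p'(·)}` whenever `lam` bounds `‖χ_B‖_{p(·)}`. -/
lemma le_chi_norm {n : ℕ} {p : E n → ℝ} (hp : Measurable p) (h1 : ∀ x, 1 < p x) {lam : ℝ≥0∞}
    (h0 : lam ≠ 0) (hl : lam ≠ ∞) (c : E n) (R : ℝ)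
    (h : ∫⁻ x, ((ball c R).indicator (fun _ => (1 : ℝ≥0∞)) x / lam) ^ p x ≤ 1) :
    volume (ball c R) ≤
      2 * lam * luxNorm (fun x => p x / (p x - 1))
        ((ball c R).indicator (fun _ => (1 : ℝ≥0∞))) := by
  rw [← one_mul (volume _)]
  refine holder_ball hp measurable_const h1 one_ne_zero h0 hl c R (le_trans ?_ h)
  rw [← lintegral_indicator measurableSet_ball]
  refine lintegral_mono fun x => ?_
  by_cases hx : x ∈ ball c R <;> simp [hx]

/-! ### The weighted inequality -/

lemma inv_conj_eq {t : ℝ} (ht : 1 < t) : (t / (t - 1))⁻¹ = 1 - t⁻¹ := by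
  have : t ≠ 0 := by linarith
  rw [inv_div]
  field_simp

lemma conj_bounds {m t : ℝ} (hm : 1 < m) (ht : m ≤ t) :
    1 ≤ t / (t - 1) ∧ t / (t - 1) ≤ m / (m - 1) := by
  have h1 : 0 < t - 1 := by linarith
  have h2 : 0 < m - 1 := by linarith
  refine ⟨by rw [le_div_iff₀ h1]; linarith, ?_⟩
  rw [div_le_div_iff₀ h1 h2]
  nlinarith

/-- weighted Calderón–Scott type inequality for variable sharp
maximal functions: if `w⁻¹ ∈ A_{q(·),∞}` with `q(x) = n/(δ(x) − δ̃(x))`, then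
`‖f^♯_{δ̃(·)}/w‖_∞ ≤ C ‖f^♯_{δ(·)}/w‖_{q(·)}`. -/
theorem statement18 (n : ℕ) (β : ℝ) (δ δt s p q : E n → ℝ) (w : E n → ℝ≥0∞)
    (hn : 1 ≤ n) (hβ : 1 < β)
    (hδmeas : Measurable δ) (hδtmeas : Measurable δt)
    (hbounds : ∀ x, 0 ≤ δt x ∧ δt x < δ x ∧ δ x < 1)
    (hsdef : ∀ x, δ x / (n : ℝ) = 1 / β - 1 / s x)
    (hpdef : ∀ x, δt x / (n : ℝ) = 1 / β - 1 / p x)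
    (hqdef : ∀ x, q x = (n : ℝ) / (δ x - δt x))
    (hsmeas : Measurable s) (sm sM : ℝ) (hsm : ∀ x, sm ≤ s x) (hsM : ∀ x, s x ≤ sM)
    (h1sm : 1 < sm) (hslog : LogHolder n s)
    (hpmeas : Measurable p) (pm pM : ℝ) (hpm : ∀ x, pm ≤ p x) (hpM : ∀ x, p x ≤ pM)
    (h1pm : 1 < pm) (hplog : LogHolder n p)
    (hqmeas : Measurable q) (qm qM : ℝ) (hqm : ∀ x, qm ≤ q x) (hqM : ∀ x, q x ≤ qM)
    (h1qm : 1 < qm)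
    (hwmeas : Measurable w) (hwA : AvarInf n q (fun x => (w x)⁻¹)) :
    ∃ C : ℝ≥0,
      ∀ f : E n → ℝ, Measurable f → LocallyIntegrable f volume →
        essSup (fun x => sharpVar β (fun y => p y / (p y - 1)) f x * (w x)⁻¹) volume ≤
          (C : ℝ≥0∞) *
            luxNorm q (fun x => sharpVar β (fun y => s y / (s y - 1)) f x * (w x)⁻¹) := by
  have hs1 : ∀ x, 1 < s x := fun x => h1sm.trans_le (hsm x)
  have hp1 : ∀ x, 1 < p x := fun x => h1pm.trans_le (hpm x)
  have hq1 : ∀ x, 1 < q x := fun x => h1qm.trans_le (hqm x)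
  have hqinv : ∀ x, (q x)⁻¹ = (p x)⁻¹ - (s x)⁻¹ := fun x => by
    have h1 := hsdef x
    have h2 := hpdef x
    rw [hqdef x, inv_div, _root_.sub_div, h1, h2]
    ring
  have hpinvLH : LogHolder n fun x => (p x)⁻¹ := hplog.of_le hplog 1 zero_le_one fun x y => by
    have := abs_inv_sub_inv_le (hp1 x).le (hp1 y).le
    have := abs_nonneg (p x - p y)
    linarith
  have hsinvLH : LogHolder n fun x => (s x)⁻¹ := hslog.of_le hslog 1 zero_le_one fun x y => by
    have := abs_inv_sub_inv_le (hs1 x).le (hs1 y).le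
    have := abs_nonneg (s x - s y)
    linarith
  have hscLH : LogHolder n fun x => (s x / (s x - 1))⁻¹ :=
    hsinvLH.of_le hsinvLH 1 zero_le_one fun x y => by
      rw [inv_conj_eq (hs1 x), inv_conj_eq (hs1 y), _root_.sub_sub_sub_cancel_left, abs_sub_comm]
      have := abs_nonneg ((s x)⁻¹ - (s y)⁻¹)
      linarith
  have hqcLH : LogHolder n fun x => (q x / (q x - 1))⁻¹ :=
    hpinvLH.of_le hsinvLH 1 zero_le_one fun x y => by
      rw [inv_conj_eq (hq1 x), inv_conj_eq (hq1 y), hqinv, hqinv]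
      rw [show 1 - ((p x)⁻¹ - (s x)⁻¹) - (1 - ((p y)⁻¹ - (s y)⁻¹)) =
        ((s x)⁻¹ - (s y)⁻¹) - ((p x)⁻¹ - (p y)⁻¹) by ring]
      have := abs_sub ((s x)⁻¹ - (s y)⁻¹) ((p x)⁻¹ - (p y)⁻¹)
      linarith
  obtain ⟨K₀, hK₀, hs⟩ := exists_modular_le hn s sM (fun x => (hs1 x).le) hsM hsinvLH
  obtain ⟨K₁, hK₁, hsc⟩ := exists_modular_le hn _ (sm / (sm - 1))
    (fun x => (conj_bounds h1sm (hsm x)).1) (fun x => (conj_bounds h1sm (hsm x)).2) hscLH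
  obtain ⟨K₂, hK₂, hqc⟩ := exists_modular_le hn _ (qm / (qm - 1))
    (fun x => (conj_bounds h1qm (hqm x)).1) (fun x => (conj_bounds h1qm (hqm x)).2) hqcLH
  obtain ⟨K₃, hK₃, hpK⟩ := exists_modular_le hn p pM (fun x => (hp1 x).le) hpM hpinvLH
  obtain ⟨C₁, hC₁⟩ := hwA
  set S' : E n → ℝ → ℝ≥0∞ := fun c R => luxNorm (fun x => s x / (s x - 1))
    ((ball c R).indicator (fun _ => (1 : ℝ≥0∞))) with hS'
  set P' : E n → ℝ → ℝ≥0∞ := fun c R => luxNorm (fun x => p x / (p x - 1))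
    ((ball c R).indicator (fun _ => (1 : ℝ≥0∞))) with hP'
  set Q' : E n → ℝ → ℝ≥0∞ := fun c R => luxNorm (fun x => q x / (q x - 1))
    ((ball c R).indicator (fun _ => (1 : ℝ≥0∞))) with hQ'
  have hvpos : ∀ (c : E n) (R : ℝ), 0 < R → volume (ball c R) ≠ 0 := fun c R hR =>
    (measure_ball_pos _ _ hR).ne'
  have hvtop : ∀ (c : E n) (R : ℝ), volume (ball c R) ≠ ∞ := fun c R =>
    measure_ball_lt_top.ne
  have hS0 : ∀ (c : E n) (R : ℝ), 0 < R → S' c R ≠ 0 := by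
    intro c R hR h0
    obtain ⟨z, hz⟩ := exists_isRef hn c R
    have hV := ENNReal.toReal_pos (hvpos c R hR) (hvtop c R)
    have := le_chi_norm hsmeas hs1 (ENNReal.ofReal_pos.2 (by positivity)).ne'
      ENNReal.ofReal_ne_top c R (hs c R hR z hz)
    rw [show luxNorm _ _ = 0 from h0, mul_zero] at this
    exact hvpos c R hR (le_antisymm this zero_le)
  have hStop : ∀ (c : E n) (R : ℝ), 0 < R → S' c R ≠ ∞ := by
    intro c R hR
    obtain ⟨z, hz⟩ := exists_isRef hn c R
    have hV := ENNReal.toReal_pos (hvpos c R hR) (hvtop c R)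
    exact ne_top_of_le_ne_top ENNReal.ofReal_ne_top
      (luxNorm_le (ENNReal.ofReal_pos.2 (by positivity)).ne' (hsc c R hR z hz))
  -- the three exponents `1/s'`, `1/q'`, `1/p` add up to `2` at the reference point
  have hSQP : ∀ (c : E n) (R : ℝ), 0 < R →
      S' c R * Q' c R ≤ 2 * ENNReal.ofReal (K₁ * K₂ * K₃) * volume (ball c R) * P' c R := by
    intro c R hR
    obtain ⟨z, hz⟩ := exists_isRef hn c R
    have hV := ENNReal.toReal_pos (hvpos c R hR) (hvtop c R)
    have b1 : S' c R ≤ _ :=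
      luxNorm_le (ENNReal.ofReal_pos.2 (by positivity)).ne' (hsc c R hR z hz)
    have b2 : Q' c R ≤ _ :=
      luxNorm_le (ENNReal.ofReal_pos.2 (by positivity)).ne' (hqc c R hR z hz)
    have b3 : volume (ball c R) ≤ 2 * _ * P' c R :=
      le_chi_norm hpmeas hp1 (ENNReal.ofReal_pos.2 (by positivity)).ne'
        ENNReal.ofReal_ne_top c R (hpK c R hR z hz)
    have hVB : ENNReal.ofReal (volume (ball c R)).toReal = volume (ball c R) :=
      ENNReal.ofReal_toReal (hvtop c R)
    rw [← ENNReal.mul_le_mul_iff_right (hvpos c R hR) (hvtop c R)]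
    set V := (volume (ball c R)).toReal with hVdef
    have hpow : V ^ (s z / (s z - 1))⁻¹ * V ^ (q z / (q z - 1))⁻¹ * V ^ (p z)⁻¹ = V * V := by
      rw [← Real.rpow_add hV, ← Real.rpow_add hV, inv_conj_eq (hs1 z), inv_conj_eq (hq1 z), hqinv,
        show 1 - (s z)⁻¹ + (1 - ((p z)⁻¹ - (s z)⁻¹)) + (p z)⁻¹ = 1 + 1 by ring,
        Real.rpow_add hV, Real.rpow_one]
    calc volume (ball c R) * (S' c R * Q' c R)
        ≤ (2 * ENNReal.ofReal (K₃ * V ^ (p z)⁻¹) * P' c R) *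
            (ENNReal.ofReal (K₁ * V ^ (s z / (s z - 1))⁻¹) *
              ENNReal.ofReal (K₂ * V ^ (q z / (q z - 1))⁻¹)) := by gcongr
      _ = 2 * (ENNReal.ofReal (K₁ * V ^ (s z / (s z - 1))⁻¹) *
              ENNReal.ofReal (K₂ * V ^ (q z / (q z - 1))⁻¹) *
              ENNReal.ofReal (K₃ * V ^ (p z)⁻¹)) * P' c R := by ring
      _ = 2 * (ENNReal.ofReal (K₁ * K₂ * K₃) * (ENNReal.ofReal V * ENNReal.ofReal V)) *
            P' c R := by
          rw [← ENNReal.ofReal_mul (by positivity), ← ENNReal.ofReal_mul (by positivity),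
            ← ENNReal.ofReal_mul (by positivity), ← ENNReal.ofReal_mul (by positivity), ← hpow]
          congr 3
          ring
      _ = _ := by
          rw [hVB]
          ring
  refine ⟨C₁ * (2 * (2 * (K₁ * K₂ * K₃).toNNReal)) + 1, fun f hf _ => ?_⟩
  set C : ℝ≥0∞ := ((C₁ * (2 * (2 * (K₁ * K₂ * K₃).toNNReal)) + 1 : ℝ≥0) : ℝ≥0∞) with hC
  have hC0 : C ≠ 0 := by rw [hC]; simp
  have hCtop : C ≠ ∞ := ENNReal.coe_ne_top
  have hCle : C₁ * (2 * (2 * ENNReal.ofReal (K₁ * K₂ * K₃))) ≤ C := by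
    rw [hC]
    push_cast
    exact le_self_add
  refine essSup_le_of_ae_le _ ?_
  filter_upwards [ae_le_essSup_ball (fun x => (w x)⁻¹)] with x hx
  rw [mul_comm C, ← ENNReal.div_le_iff_le_mul (Or.inl hC0) (Or.inl hCtop)]
  refine le_sInf fun lam hlam => ?_
  obtain ⟨hl0, hlam⟩ := hlam
  rw [ENNReal.div_le_iff_le_mul (Or.inl hC0) (Or.inl hCtop)]
  rcases eq_or_ne lam ∞ with rfl | hl
  · rw [ENNReal.top_mul hC0]
    exact le_top
  simp only [sharpVar, ENNReal.iSup_mul]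
  refine iSup_le fun c => iSup_le fun R => iSup_le fun hxB => ?_
  obtain ⟨hR, hxB⟩ := hxB
  set A := ∫⁻ y in ball c R, ENNReal.ofReal |f y - (⨍ z in ball c R, f z)| with hA
  set b := volume (ball c R) ^ ((1 : ℝ) / β) with hb
  have hβ0 : (0 : ℝ) ≤ 1 / β := by positivity
  have hb0 : b ≠ 0 := (ENNReal.rpow_pos (measure_ball_pos _ _ hR) (hvtop c R)).ne'
  have hbtop : b ≠ ∞ := ENNReal.rpow_ne_top_of_nonneg hβ0 (hvtop c R)
  set a := (b * S' c R)⁻¹ * A with ha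
  have hAeq : A = b * S' c R * a := by
    rw [ha, ← mul_assoc, ENNReal.mul_inv_cancel (mul_ne_zero hb0 (hS0 c R hR))
      (ENNReal.mul_ne_top hbtop (hStop c R hR)), one_mul]
  change (b * P' c R)⁻¹ * A * (w x)⁻¹ ≤ lam * C
  have hred : (b * P' c R)⁻¹ * A * (w x)⁻¹ = a * S' c R * (w x)⁻¹ / P' c R := by
    rw [hAeq, ENNReal.mul_inv (Or.inl hb0) (Or.inl hbtop), div_eq_mul_inv]
    calc b⁻¹ * (P' c R)⁻¹ * (b * S' c R * a) * (w x)⁻¹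
        = b⁻¹ * b * (a * S' c R * (w x)⁻¹ * (P' c R)⁻¹) := by ring
      _ = _ := by rw [ENNReal.inv_mul_cancel hb0 hbtop, one_mul]
  rw [hred]
  refine ENNReal.div_le_of_le_mul ?_
  rcases eq_or_ne a 0 with ha0 | ha0
  · simp [ha0]
  -- `a` is a lower bound for the sharp function on the whole ball
  have hmod : ∫⁻ y in ball c R, (a * (w y)⁻¹ / lam) ^ q y ≤ 1 := by
    refine le_trans ?_ ((setLIntegral_le_lintegral (ball c R) _).trans hlam)
    refine setLIntegral_mono' measurableSet_ball fun y hy => ?_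
    refine ENNReal.rpow_le_rpow ?_ (by linarith [hq1 y])
    have hle : a ≤ sharpVar β (fun y => s y / (s y - 1)) f y :=
      le_iSup_of_le (f := fun c => ⨆ (R : ℝ) (_ : 0 < R ∧ y ∈ ball c R), _) c
        (le_iSup_of_le R (le_iSup_of_le ⟨hR, hy⟩ le_rfl))
    exact ENNReal.div_le_div_right (mul_le_mul_left hle _) _
  have hhol := holder_ball hqmeas hwmeas hq1 ha0 hl0 hl c R hmod
  have hA1 := hC₁ c R hR
  simp only [inv_inv] at hA1
  -- Hölder, then the `A_{q(·),∞}` condition, then the comparison of indicator norms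
  set W := luxNorm (fun x => q x / (q x - 1)) ((ball c R).indicator w) with hW
  rw [← ENNReal.mul_le_mul_iff_right (hvpos c R hR) (hvtop c R)]
  calc volume (ball c R) * (a * S' c R * (w x)⁻¹)
      = (a * volume (ball c R)) * S' c R * (w x)⁻¹ := by ring
    _ ≤ (2 * lam * W) * S' c R * essSup (fun x => (w x)⁻¹) (volume.restrict (ball c R)) := by
        gcongr
        exact hx c R hxB
    _ = 2 * lam * S' c R * (essSup (fun x => (w x)⁻¹) (volume.restrict (ball c R)) * W) := by ring
    _ ≤ 2 * lam * S' c R * (C₁ * Q' c R) := by gcongr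
    _ = 2 * lam * C₁ * (S' c R * Q' c R) := by ring
    _ ≤ 2 * lam * C₁ *
          (2 * ENNReal.ofReal (K₁ * K₂ * K₃) * volume (ball c R) * P' c R) := by
        grw [hSQP c R hR]
    _ = volume (ball c R) * (lam * (C₁ * (2 * (2 * ENNReal.ofReal (K₁ * K₂ * K₃)))) * P' c R) := by
        ring
    _ ≤ volume (ball c R) * (lam * C * P' c R) := by gcongr
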